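/- If m¹ is a reversible measure for q, and for m¹-almost every x ∈ (−1,1) the measure q(x,·) is not mutually singular with m¹, then there exists a probability measure on E* which is ergodic for Q and absolutely continuous with respect to m². -/

import Mathlib

open MeasureTheory ProbabilityTheory Set Pointwise
open scoped ENNReal

noncomputable section

/-- The increasing affine map from `(-1,1)` onto the chord `E_u`. -/
def ellMap (γ u x : ℝ) : ℝ := -u * Real.cos γ + x * Real.sqrt (1 - u ^ 2 * Real.sin γ ^ 2)

/-- The inverse of `ellMap γ u`. -/
def ellInv (γ u y : ℝ) : ℝ := (y + u * Real.cos γ) / Real.sqrt (1 - u ^ 2 * Real.sin γ ^ 2)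

/-- The open elliptical region `E`. -/
def Eset (γ : ℝ) : Set (ℝ × ℝ) :=
  {p | p.1 ^ 2 + 2 * Real.cos γ * p.1 * p.2 + p.2 ^ 2 < 1}

/-- The state space `E* = E × {−1,1}`, realized inside `ℝ × ℝ × ℝ`. -/
def EstarSet (γ : ℝ) : Set (ℝ × ℝ × ℝ) :=
  {w | (w.1, w.2.1) ∈ Eset γ ∧ (w.2.2 = 1 ∨ w.2.2 = -1)}

/-- Uniform probability measure on `(-1,1)`. -/
def m1 : Measure ℝ := (2 : ℝ≥0∞)⁻¹ • volume.restrict (Ioo (-1 : ℝ) 1)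

/-- The probability measure `m²` on `E*`: normalized Lebesgue measure on `E` times
uniform measure on `{−1,1}`. -/
def m2 (γ : ℝ) : Measure (ℝ × ℝ × ℝ) :=
  ((((volume (Eset γ))⁻¹ • volume.restrict (Eset γ)).prod
      ((2 : ℝ≥0∞)⁻¹ • (Measure.dirac (1 : ℝ) + Measure.dirac (-1 : ℝ)))).map
    fun p => (p.1.1, p.1.2, p.2))

/-- `q` is a Markov kernel on `(-1,1)`. -/
def IsMarkovOnInterval (q : Kernel ℝ ℝ) : Prop :=
  IsMarkovKernel q ∧ ∀ x ∈ Ioo (-1 : ℝ) 1, q x (Ioo (-1 : ℝ) 1) = 1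

/-- The kernel `Q` of the alternating random walk, as a measure-valued function on the
state space. -/
def Qfun (γ : ℝ) (q : Kernel ℝ ℝ) : ℝ × ℝ × ℝ → Measure (ℝ × ℝ × ℝ) := fun w =>
  if w.2.2 = -1 then
    Measure.map (fun x => (ellMap γ w.2.1 x, w.2.1, (1 : ℝ))) (q (-ellInv γ w.2.1 w.1))
  else
    Measure.map (fun x => (w.1, ellMap γ w.1 x, (-1 : ℝ))) (q (-ellInv γ w.1 w.2.1))

/-- The kernel `Q†`. -/
def Qdag (γ : ℝ) (q : Kernel ℝ ℝ) : ℝ × ℝ × ℝ → Measure (ℝ × ℝ × ℝ) := fun w =>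
  if w.2.2 = 1 then
    Measure.map (fun x => (ellMap γ w.2.1 x, w.2.1, (-1 : ℝ)))
      ((q (ellInv γ w.2.1 w.1)).map (fun y => -y))
  else
    Measure.map (fun x => (w.1, ellMap γ w.1 x, (1 : ℝ)))
      ((q (ellInv γ w.1 w.2.1)).map (fun y => -y))

/-- Bounded continuous real-valued functions on a subset `S`. -/
def BddCtsOn {X : Type*} [TopologicalSpace X] (S : Set X) (f : X → ℝ) : Prop :=
  ContinuousOn f S ∧ ∃ C, ∀ x ∈ S, |f x| ≤ C

/-- `m¹` is a reversible measure for `q`. -/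
def Reversible1 (q : Kernel ℝ ℝ) : Prop :=
  ∀ j k : ℝ → ℝ, BddCtsOn (Ioo (-1 : ℝ) 1) j → BddCtsOn (Ioo (-1 : ℝ) 1) k →
    ∫ x, k x * ∫ y, j y ∂(q x) ∂m1 = ∫ x, j x * ∫ y, k y ∂(q x) ∂m1

/-- The `†`-operation on measure-valued functions on `(-1,1)`: `p†(x,A) := p(−x,−A)`. -/
def dag (p : ℝ → Measure ℝ) : ℝ → Measure ℝ := fun x => (p (-x)).map (fun y => -y)

/-- `m¹` is a `†`-reversible measure for `p`. -/
def DagReversible1 (p : ℝ → Measure ℝ) : Prop :=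
  ∀ j k : ℝ → ℝ, BddCtsOn (Ioo (-1 : ℝ) 1) j → BddCtsOn (Ioo (-1 : ℝ) 1) k →
    ∫ x, k x * ∫ y, j y ∂(p x) ∂m1 = ∫ x, j x * ∫ y, k y ∂(dag p x) ∂m1

/-- `m²` is a `†`-reversible measure for `Q`. -/
def DagReversible2 (γ : ℝ) (q : Kernel ℝ ℝ) : Prop :=
  ∀ f g : ℝ × ℝ × ℝ → ℝ, BddCtsOn (EstarSet γ) f → BddCtsOn (EstarSet γ) g →
    ∫ w, g w * ∫ w', f w' ∂(Qfun γ q w) ∂(m2 γ) =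
      ∫ w, f w * ∫ w', g w' ∂(Qdag γ q w) ∂(m2 γ)

/-- `μ` is an invariant measure for the transition function `p`. -/
def KInvariantMeasure {S : Type*} [MeasurableSpace S] (μ : Measure S) (p : S → Measure S) :
    Prop :=
  ∀ A : Set S, MeasurableSet A → ∫⁻ x, p x A ∂μ = μ A

/-- The set `A` is `(μ,p)`-invariant. -/
def KInvariantSet {S : Type*} [MeasurableSpace S] (μ : Measure S) (p : S → Measure S)
    (A : Set S) : Prop :=
  ∀ᵐ x ∂μ, x ∈ A → p x A = 1

/-- `μ` is an ergodic measure for the transition function `p`. -/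
def KErgodicMeasure {S : Type*} [MeasurableSpace S] (μ : Measure S) (p : S → Measure S) :
    Prop :=
  KInvariantMeasure μ p ∧
    ∀ A : Set S, MeasurableSet A → KInvariantSet μ p A → μ A = 0 ∨ μ A = 1

/-- The set `A` is `(μ,p)`-ergodic. -/
def KErgodicSet {S : Type*} [MeasurableSpace S] (μ : Measure S) (p : S → Measure S)
    (A : Set S) : Prop :=
  MeasurableSet A ∧ KInvariantSet μ p A ∧
    ∀ B : Set S, B ⊆ A → MeasurableSet B → KInvariantSet μ p B → μ B = 0 ∨ μ B = μ A

/-- `F⁺`: the slice of `F ⊆ E*` at `s = 1`. -/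
def Fplus (F : Set (ℝ × ℝ × ℝ)) : Set (ℝ × ℝ) := {p | (p.1, p.2, (1 : ℝ)) ∈ F}

/-- `F⁻`: the slice of `F ⊆ E*` at `s = −1`. -/
def Fminus (F : Set (ℝ × ℝ × ℝ)) : Set (ℝ × ℝ) := {p | (p.1, p.2, (-1 : ℝ)) ∈ F}

/-- `[G]^u ⊆ (−1,1)`. -/
def brU (γ : ℝ) (G : Set (ℝ × ℝ)) (u : ℝ) : Set ℝ :=
  {x | x ∈ Ioo (-1 : ℝ) 1 ∧ (u, ellMap γ u x) ∈ G}

/-- `[G]_v ⊆ (−1,1)`. -/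
def brV (γ : ℝ) (G : Set (ℝ × ℝ)) (v : ℝ) : Set ℝ :=
  {x | x ∈ Ioo (-1 : ℝ) 1 ∧ (ellMap γ v x, v) ∈ G}

/-- The map `T₀` on `E*`. -/
def T0 (γ : ℝ) (w : ℝ × ℝ × ℝ) : ℝ × ℝ × ℝ :=
  (-w.1 - 2 * w.2.1 * Real.cos γ, w.2.1, -w.2.2)

/-- The map `T₁` on `E*`. -/
def T1 (γ : ℝ) (w : ℝ × ℝ × ℝ) : ℝ × ℝ × ℝ :=
  (w.1, -w.2.1 - 2 * w.1 * Real.cos γ, -w.2.2)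

/-- The linear map `U_γ` taking `E` to the unit disk. -/
def Ugamma (γ : ℝ) (p : ℝ × ℝ) : ℝ × ℝ := (p.1 + p.2 * Real.cos γ, p.2 * Real.sin γ)

/-- `V(u,v,s) = s·|U_γ(u,v)|²`. -/
def Vfun (γ : ℝ) (w : ℝ × ℝ × ℝ) : ℝ :=
  w.2.2 * ((w.1 + w.2.1 * Real.cos γ) ^ 2 + (w.2.1 * Real.sin γ) ^ 2)

/-!
If `q x` has an absolutely continuous part for enough `x`, there are nonnull sets `X` and `Y` of
positions on a chord that are locked together: given the chord, almost all of the positions in `X`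
before a move and in `Y` after it belong to an invariant set, or almost none do, so that membership
depends on the chord only. Applied to the vertical and to the horizontal chords, this makes
membership of a point of the crossing set, whose positions on its two chords lie in `X` and `Y`,
a function of `u` alone and also a function of `v` alone. A second locking argument, now between `u`
and `v`, yields a nonnull set `D` which every invariant set contains or misses up to null sets.
A smallest invariant set containing `D` is then ergodic, and `m²` conditioned on it is the required
measure.
-/

section Ergodic

variable {S : Type*} [MeasurableSpace S] {μ : Measure S} {p : Kernel S S} {A B : Set S}

theorem kInvariantMeasure_iff_invariant : KInvariantMeasure μ p ↔ p.Invariant μ := by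
  rw [Kernel.Invariant, Measure.ext_iff]
  refine forall₂_congr fun A hA => ?_
  rw [Measure.bind_apply hA p.aemeasurable]

theorem KInvariantSet.iInter [IsMarkovKernel p] {ι : Type*} [Countable ι] {A : ι → Set S}
    (hA : ∀ i, MeasurableSet (A i)) (h : ∀ i, KInvariantSet μ p (A i)) :
    KInvariantSet μ p (⋂ i, A i) := by
  filter_upwards [ae_all_iff.2 h] with x hx hxA
  rw [← mem_ae_iff_prob_eq_one (.iInter hA), countable_iInter_mem]
  exact fun i => (mem_ae_iff_prob_eq_one (hA i)).2 (hx i (mem_iInter.1 hxA i))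

theorem KInvariantSet.inter [IsMarkovKernel p] (hA : MeasurableSet A) (hB : MeasurableSet B)
    (hAinv : KInvariantSet μ p A) (hBinv : KInvariantSet μ p B) : KInvariantSet μ p (A ∩ B) := by
  rw [inter_eq_iInter]
  exact iInter (Bool.forall_bool.2 ⟨hB, hA⟩) (Bool.forall_bool.2 ⟨hBinv, hAinv⟩)

theorem KInvariantSet.ae_eq_indicator [IsFiniteMeasure μ] (h : KInvariantSet μ p A)
    (hμ : KInvariantMeasure μ p) (hA : MeasurableSet A) :
    (fun x => p x A) =ᵐ[μ] A.indicator 1 := by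
  refine (ae_eq_of_ae_le_of_lintegral_le ?_ ?_ (p.measurable_coe hA).aemeasurable ?_).symm
  · filter_upwards [h] with x hx
    exact indicator_apply_le' (fun hxA => (hx hxA).ge) fun _ => zero_le
  · simpa only [lintegral_indicator_one hA] using measure_ne_top μ A
  · rw [lintegral_indicator_one hA, hμ A hA]

theorem KInvariantSet.compl [IsMarkovKernel p] [IsFiniteMeasure μ] (h : KInvariantSet μ p A)
    (hμ : KInvariantMeasure μ p) (hA : MeasurableSet A) : KInvariantSet μ p Aᶜ := by
  filter_upwards [h.ae_eq_indicator hμ hA] with x hx hxA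
  rw [prob_compl_eq_one_iff hA, hx, indicator_of_notMem hxA]

theorem KInvariantSet.kInvariantMeasure_restrict [IsMarkovKernel p] [IsFiniteMeasure μ]
    (h : KInvariantSet μ p A) (hμ : KInvariantMeasure μ p) (hA : MeasurableSet A) :
    KInvariantMeasure (μ.restrict A) p := by
  intro B hB
  have hAB : (fun x => p x (B ∩ A)) =ᵐ[μ] A.indicator fun x => p x B := by
    filter_upwards [h, h.ae_eq_indicator hμ hA] with x hx hx'
    by_cases hxA : x ∈ A
    · rw [indicator_of_mem hxA, measure_inter_conull ((prob_compl_eq_zero_iff hA).2 (hx hxA))]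
    · rw [indicator_of_notMem hxA] at hx' ⊢
      exact measure_mono_null inter_subset_right hx'
  rw [Measure.restrict_apply hB, ← hμ _ (hB.inter hA), lintegral_congr_ae hAB,
    lintegral_indicator hA]

theorem KInvariantMeasure.smul (hμ : KInvariantMeasure μ p) (c : ℝ≥0∞) :
    KInvariantMeasure (c • μ) p := fun A hA => by
  rw [lintegral_smul_measure, hμ A hA, Measure.smul_apply]

theorem exists_measure_minimal (μ : Measure S) {𝒞 : Set (Set S)} (hne : 𝒞.Nonempty)
    (h𝒞 : ∀ A : ℕ → Set S, (∀ n, A n ∈ 𝒞) → ⋂ n, A n ∈ 𝒞) :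
    ∃ G ∈ 𝒞, ∀ A ∈ 𝒞, μ G ≤ μ A := by
  obtain ⟨a, -, ha, haI⟩ := exists_seq_tendsto_sInf (hne.image μ) (OrderBot.bddBelow _)
  choose A hA hAa using haI
  refine ⟨⋂ n, A n, h𝒞 A hA, fun B hB => ?_⟩
  calc μ (⋂ n, A n) ≤ sInf (μ '' 𝒞) :=
        ge_of_tendsto' ha fun n => (measure_mono (iInter_subset A n)).trans_eq (hAa n)
    _ ≤ μ B := sInf_le (mem_image_of_mem μ hB)

theorem exists_kErgodicSet_of_forall_ae_subset_or_compl [IsMarkovKernel p] [IsFiniteMeasure μ]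
    (hμ : KInvariantMeasure μ p) {D : Set S}
    (hD : ∀ F, MeasurableSet F → KInvariantSet μ p F → D ≤ᵐ[μ] F ∨ D ≤ᵐ[μ] Fᶜ) :
    ∃ G, KErgodicSet μ p G ∧ D ≤ᵐ[μ] G := by
  obtain ⟨G, ⟨hG, hGinv, hDG⟩, hGmin⟩ := exists_measure_minimal μ
    (𝒞 := {F | MeasurableSet F ∧ KInvariantSet μ p F ∧ D ≤ᵐ[μ] F})
    ⟨univ, .univ, ae_of_all _ fun x _ => measure_univ, ae_of_all _ fun x _ => mem_univ x⟩
    fun A hA => ⟨.iInter fun n => (hA n).1, .iInter (fun n => (hA n).1) fun n => (hA n).2.1, by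
      filter_upwards [ae_all_iff.2 fun n => (hA n).2.2] with x hx hxD
      exact mem_iInter.2 fun n => hx n hxD⟩
  refine ⟨G, ⟨hG, hGinv, fun B hBG hB hBinv => ?_⟩, hDG⟩
  rcases hD B hB hBinv with hDB | hDB
  · exact Or.inr ((measure_mono hBG).antisymm (hGmin B ⟨hB, hBinv, hDB⟩))
  · have hle : μ G ≤ μ (G \ B) := hGmin _ ⟨hG.diff hB,
      .inter hG hB.compl hGinv (hBinv.compl hμ hB), by
        filter_upwards [hDG, hDB] with x hxG hxB hxD using ⟨hxG hxD, hxB hxD⟩⟩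
    rw [measure_sdiff hBG hB.nullMeasurableSet (measure_ne_top μ B)] at hle
    by_contra! hB0
    exact hle.not_gt (ENNReal.sub_lt_self (measure_ne_top μ G)
      (fun h => hB0.1 (measure_mono_null hBG h)) hB0.1)

theorem KErgodicSet.kErgodicMeasure_cond [IsMarkovKernel p] [IsFiniteMeasure μ] {G : Set S}
    (hG : KErgodicSet μ p G) (hμ : KInvariantMeasure μ p) (hG0 : μ G ≠ 0) :
    KErgodicMeasure μ[|G] p := by
  obtain ⟨hGm, hGinv, hGerg⟩ := hG
  refine ⟨(hGinv.kInvariantMeasure_restrict hμ hGm).smul _, fun A hA hAinv => ?_⟩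
  have hGA : KInvariantSet μ p (G ∩ A) := by
    have hA' : ∀ᵐ x ∂μ.restrict G, x ∈ A → p x A = 1 :=
      (Measure.ae_ennreal_smul_measure_iff (by simp [measure_ne_top])).1 hAinv
    filter_upwards [ae_imp_of_ae_restrict hA', hGinv] with x hxA hxG hx
    rw [← mem_ae_iff_prob_eq_one (hGm.inter hA)]
    exact Filter.inter_mem ((mem_ae_iff_prob_eq_one hGm).2 (hxG hx.1))
      ((mem_ae_iff_prob_eq_one hA).2 (hxA hx.1 hx.2))
  rw [cond_apply hGm]
  refine (hGerg _ inter_subset_left (hGm.inter hA) hGA).imp (fun h => ?_) fun h => ?_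
  · rw [h, mul_zero]
  · rw [h, ENNReal.inv_mul_cancel hG0 (measure_ne_top μ G)]

end Ergodic

section Locking

variable {α β : Type*} [MeasurableSpace α] [MeasurableSpace β] {μ : Measure α} {ν : Measure β}

/-- `A` is locked to `B` on `X` and `Y`: up to null sets, either `X` and `Y` are contained in `A`
and `B` respectively, or both are disjoint from them. The proposition `P` tells which. -/
def AELocked (μ : Measure α) (ν : Measure β) (X : Set α) (Y : Set β) (A : Set α) (B : Set β) :
    Prop :=
  ∃ P : Prop, (∀ᵐ x ∂μ, x ∈ X → (x ∈ A ↔ P)) ∧ ∀ᵐ y ∂ν, y ∈ Y → (y ∈ B ↔ P)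

theorem exists_mem_two_mul_measure_sdiff_lt [SigmaFinite ν] {𝒜 : Set (Set β)}
    (h𝒜 : ν.MeasureDense 𝒜) {S : Set β} (hS : MeasurableSet S) (hS0 : ν S ≠ 0) :
    ∃ A ∈ 𝒜, 2 * ν (A \ S) < ν A := by
  obtain ⟨T, hT, hTS, hT0, hTtop⟩ :=
    Measure.exists_subset_measure_lt_top hS (pos_iff_ne_zero.2 hS0)
  obtain ⟨A, hA, hTA⟩ := h𝒜.approx T hT hTtop.ne ((ν T).toReal / 2)
    (half_pos (ENNReal.toReal_pos hT0.ne' hTtop.ne))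
  refine ⟨A, hA, ?_⟩
  have hsymm : ν (T \ A) + ν (A \ T) < ν T / 2 := by
    rw [ENNReal.ofReal_div_of_pos two_pos, ENNReal.ofReal_toReal hTtop.ne, ENNReal.ofReal_ofNat,
      measure_symmDiff_eq hT.nullMeasurableSet (h𝒜.measurable A hA).nullMeasurableSet] at hTA
    exact hTA
  refine lt_of_add_lt_add_left (a := ν (T \ A)) ?_
  calc ν (T \ A) + 2 * ν (A \ S)
      ≤ 2 * (ν (T \ A) + ν (A \ T)) := by
        rw [mul_add, two_mul (ν (T \ A)), add_assoc]
        gcongr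
        exact le_add_left (by gcongr)
    _ < ν T := by rwa [mul_comm, ← ENNReal.lt_div_iff_mul_lt (by simp) (by simp)]
    _ ≤ ν (T \ A) + ν A := by
        grw [measure_le_inter_add_sdiff ν T A, inter_subset_right, add_comm]

theorem measure_inter_ne_zero_of_two_mul_measure_sdiff_lt {A S S' : Set β}
    (hS : 2 * ν (A \ S) < ν A) (hS' : 2 * ν (A \ S') < ν A) : ν (S ∩ S') ≠ 0 := by
  intro h0
  have hle : ν A ≤ ν (A \ S) + ν (A \ S') := calc
    ν A ≤ ν (A \ S ∪ A \ S' ∪ S ∩ S') := measure_mono fun x hx => by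
        by_cases hxS : x ∈ S <;> by_cases hxS' : x ∈ S' <;> simp [hx, hxS, hxS']
    _ ≤ ν (A \ S ∪ A \ S') + ν (S ∩ S') := measure_union_le _ _
    _ ≤ ν (A \ S) + ν (A \ S') := by rw [h0, add_zero]; exact measure_union_le _ _
  refine (ENNReal.add_lt_add hS hS').not_ge ?_
  rw [← two_mul, ← mul_add]
  gcongr

/-- Any two slices meet because both nearly fill one set `A`; a nonnull set of `x` shares the same
`A` because `A` only has to range over a countable measure-dense family. -/
theorem exists_measurableSet_forall_slices_overlap [SigmaFinite ν] [IsSeparable ν]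
    {R : Set (α × β)} (hR : MeasurableSet R) (hR0 : μ.prod ν R ≠ 0) :
    ∃ X, MeasurableSet X ∧ μ X ≠ 0 ∧
      ∀ x ∈ X, ∀ x' ∈ X, ν (Prod.mk x ⁻¹' R ∩ Prod.mk x' ⁻¹' R) ≠ 0 := by
  obtain ⟨𝒜, h𝒜c, h𝒜⟩ := exists_countable_measureDense ν
  obtain ⟨A, hA, hX0⟩ : ∃ A ∈ 𝒜, μ {x | 2 * ν (A \ Prod.mk x ⁻¹' R) < ν A} ≠ 0 := by
    by_contra! hnull
    refine hR0 ((Measure.measure_prod_null hR).2 ?_)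
    filter_upwards [(ae_ball_iff h𝒜c).2 fun A hA => measure_eq_zero_iff_ae_notMem.1 (hnull A hA)]
      with x hx
    by_contra hx0
    obtain ⟨A, hA, hlt⟩ :=
      exists_mem_two_mul_measure_sdiff_lt h𝒜 (measurable_prodMk_left hR) hx0
    exact hx A hA hlt
  refine ⟨_, ?_, hX0, fun x hx x' hx' => measure_inter_ne_zero_of_two_mul_measure_sdiff_lt hx hx'⟩
  have hmeas : MeasurableSet ((univ ×ˢ A) \ R : Set (α × β)) :=
    (MeasurableSet.univ.prod (h𝒜.measurable A hA)).diff hR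
  refine measurableSet_lt (.const_mul ?_ 2) measurable_const
  convert measurable_measure_prodMk_left (ν := ν) hmeas using 3 with x
  ext y
  simp

theorem aeLocked_of_forall_slices_overlap [SFinite μ] [SFinite ν] {R : Set (α × β)} {X A : Set α}
    {B : Set β} (hX : ∀ x ∈ X, ∀ x' ∈ X, ν (Prod.mk x ⁻¹' R ∩ Prod.mk x' ⁻¹' R) ≠ 0)
    (hAB : ∀ᵐ z ∂μ.prod ν, z ∈ R → (z.1 ∈ A ↔ z.2 ∈ B)) :
    AELocked μ ν X {y | μ {x | (x, y) ∈ R ∧ x ∈ X} ≠ 0} A B := by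
  have hagree {x x'} (hx : x ∈ X) (hx' : x' ∈ X) (hxB : ∀ᵐ y ∂ν, (x, y) ∈ R → (x ∈ A ↔ y ∈ B))
      (hxB' : ∀ᵐ y ∂ν, (x', y) ∈ R → (x' ∈ A ↔ y ∈ B)) : x ∈ A ↔ x' ∈ A := by
    by_contra hne
    refine hX x hx x' hx' (measure_eq_zero_iff_ae_notMem.2 ?_)
    filter_upwards [hxB, hxB'] with y hy hy' hyR
    exact hne ((hy hyR.1).trans (hy' hyR.2).symm)
  have hXP : ∀ᵐ x ∂μ, x ∈ X →
      (x ∈ A ↔ ∃ x' ∈ X, x' ∈ A ∧ ∀ᵐ y ∂ν, (x', y) ∈ R → (x' ∈ A ↔ y ∈ B)) := by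
    filter_upwards [Measure.ae_ae_of_ae_prod hAB] with x hx hxX
    exact ⟨fun hxA => ⟨x, hxX, hxA, hx⟩,
      fun ⟨x', hxX', hxA', hx'⟩ => (hagree hxX hxX' hx hx').2 hxA'⟩
  refine ⟨_, hXP, ?_⟩
  have hswap := Measure.ae_ae_of_ae_prod
    (Measure.measurePreserving_swap.quasiMeasurePreserving.ae hAB)
  filter_upwards [hswap] with y hy hyY
  by_contra hne
  refine hyY (measure_eq_zero_iff_ae_notMem.2 ?_)
  filter_upwards [hXP, hy] with x hxP hxy hxR
  exact hne ((hxy hxR.1).symm.trans (hxP hxR.2))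

theorem exists_forall_aeLocked_of_prod_ne_zero [SFinite μ] [SigmaFinite ν] [IsSeparable ν]
    {R : Set (α × β)} (hR : MeasurableSet R) (hR0 : μ.prod ν R ≠ 0) :
    ∃ X Y, MeasurableSet X ∧ MeasurableSet Y ∧ μ.prod ν (R ∩ X ×ˢ Y) ≠ 0 ∧
      ∀ A B, (∀ᵐ z ∂μ.prod ν, z ∈ R → (z.1 ∈ A ↔ z.2 ∈ B)) → AELocked μ ν X Y A B := by
  obtain ⟨X, hX, hX0, hoverlap⟩ := exists_measurableSet_forall_slices_overlap hR hR0
  have hRX : MeasurableSet {z : α × β | z ∈ R ∧ z.1 ∈ X} := hR.inter (measurable_fst hX)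
  set Y : Set β := {y | μ {x | (x, y) ∈ R ∧ x ∈ X} ≠ 0}
  have hY : MeasurableSet Y := measurable_measure_prodMk_right hRX (measurableSet_singleton 0).compl
  refine ⟨X, Y, hX, hY, fun h0 => hX0 ?_, fun A B => aeLocked_of_forall_slices_overlap hoverlap⟩
  have hnull : ∀ᵐ y ∂ν, ∀ᵐ x ∂μ, (x, y) ∉ {z : α × β | z ∈ R ∧ z.1 ∈ X} := by
    filter_upwards [Measure.ae_ae_of_ae_prod
      (Measure.measurePreserving_swap.quasiMeasurePreserving.ae
        (measure_eq_zero_iff_ae_notMem.1 h0))] with y hy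
    by_contra hyY
    refine hyY ?_
    filter_upwards [hy] with x hx hxR
    exact hx ⟨hxR.1, hxR.2, fun h => hyY (measure_eq_zero_iff_ae_notMem.1 h)⟩
  rw [← Measure.ae_ae_comm hRX.compl] at hnull
  refine measure_eq_zero_iff_ae_notMem.2 ?_
  filter_upwards [hnull] with x hx hxX
  refine hoverlap x hxX x hxX (measure_eq_zero_iff_ae_notMem.2 ?_)
  filter_upwards [hx] with y hy hyR using hy ⟨hyR.1, hxX⟩

end Locking

section LockingKernel

variable {α β T : Type*} [MeasurableSpace α] [MeasurableSpace β] [MeasurableSpace T]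
  {μ : Measure α} {ν : Measure β} {κ : Kernel α β} {X : Set α} {Y : Set β}

/-- `X` and `Y` are locked by the kernel `κ`: whenever `κ` sends almost every point of `A` into `B`
and almost every point outside `A` into the complement of `B`, `A` is locked to `B` on
`X` and `Y`. -/
def LockedByKernel (κ : Kernel α β) (μ : Measure α) (ν : Measure β) (X : Set α) (Y : Set β) :
    Prop :=
  ∀ ⦃A B⦄, MeasurableSet A → MeasurableSet B → (fun x => κ x B) =ᵐ[μ] A.indicator 1 →
    AELocked μ ν X Y A B

theorem ae_notMem_of_rnDeriv_ne_zero {μ ν : Measure β} {B : Set β} (hB : μ B = 0) :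
    ∀ᵐ y ∂ν, μ.rnDeriv ν y ≠ 0 → y ∉ B := by
  have h0 : ν.withDensity (μ.rnDeriv ν) B = 0 :=
    le_antisymm ((Measure.withDensity_rnDeriv_le μ ν B).trans_eq hB) zero_le
  rw [withDensity_apply_eq_zero (Measure.measurable_rnDeriv μ ν)] at h0
  filter_upwards [measure_eq_zero_iff_ae_notMem.1 h0] with y hy hne hyB using hy ⟨hne, hyB⟩

theorem ae_prod_mem_iff_of_rnDeriv_ne_zero [MeasurableSpace.CountablyGenerated β] [IsMarkovKernel κ]
    [IsFiniteMeasure ν] {A : Set α} {B : Set β} (hA : MeasurableSet A) (hB : MeasurableSet B)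
    (hAB : (fun x => κ x B) =ᵐ[μ] A.indicator 1) :
    ∀ᵐ z ∂μ.prod ν, κ.rnDeriv (.const α ν) z.1 z.2 ≠ 0 → (z.1 ∈ A ↔ z.2 ∈ B) := by
  rw [Measure.ae_prod_iff_ae_ae]
  · filter_upwards [hAB] with x hx
    have hρ : κ.rnDeriv (.const α ν) x =ᵐ[ν] (κ x).rnDeriv ν := Kernel.rnDeriv_eq_rnDeriv_measure
    by_cases hxA : x ∈ A
    · rw [indicator_of_mem hxA, Pi.one_apply, ← prob_compl_eq_zero_iff hB] at hx
      filter_upwards [hρ, ae_notMem_of_rnDeriv_ne_zero hx] with y hy hyB hne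
      exact iff_of_true hxA (not_not.1 (hyB (hy ▸ hne)))
    · rw [indicator_of_notMem hxA] at hx
      filter_upwards [hρ, ae_notMem_of_rnDeriv_ne_zero hx] with y hy hyB hne
      exact iff_of_false hxA (hyB (hy ▸ hne))
  · exact (((κ.measurable_rnDeriv _) (measurableSet_singleton 0)).compl.mem.imp
      ((measurable_fst hA).mem.iff (measurable_snd hB).mem)).setOf

theorem exists_lockedByKernel [MeasurableSpace.CountablyGenerated β] [SFinite μ] [IsFiniteMeasure ν]
    [IsMarkovKernel κ] (hκ : ∃ᵐ x ∂μ, ¬ κ x ⟂ₘ ν) :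
    ∃ X Y, MeasurableSet X ∧ MeasurableSet Y ∧ μ X ≠ 0 ∧ ν Y ≠ 0 ∧ LockedByKernel κ μ ν X Y := by
  set R : Set (α × β) := {z | κ.rnDeriv (.const α ν) z.1 z.2 ≠ 0}
  have hR : MeasurableSet R := (κ.measurable_rnDeriv _) (measurableSet_singleton 0).compl
  have hR0 : μ.prod ν R ≠ 0 := by
    rw [Ne, Measure.measure_prod_null hR]
    intro h
    refine hκ (h.mono fun x hx => not_not.2 ((Measure.rnDeriv_eq_zero _ _).1 ?_))
    have hρ : κ.rnDeriv (.const α ν) x =ᵐ[ν] (κ x).rnDeriv ν := Kernel.rnDeriv_eq_rnDeriv_measure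
    filter_upwards [hρ, measure_eq_zero_iff_ae_notMem.1 hx] with y hy hyR
    exact hy.symm.trans (not_not.1 hyR)
  obtain ⟨X, Y, hX, hY, hXY, hlock⟩ := exists_forall_aeLocked_of_prod_ne_zero hR hR0
  have hXY' : μ X * ν Y ≠ 0 := fun h =>
    hXY (measure_mono_null inter_subset_right ((Measure.prod_prod X Y).trans h))
  exact ⟨X, Y, hX, hY, left_ne_zero_of_mul hXY', right_ne_zero_of_mul hXY',
    fun A B hA hB hAB => hlock A B (ae_prod_mem_iff_of_rnDeriv_ne_zero hA hB hAB)⟩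

theorem LockedByKernel.exists_ae_prod_iff [SFinite μ] [SFinite ν] {σ : Measure T}
    (hκ : LockedByKernel κ μ ν X Y) (hX : MeasurableSet X) (hY : MeasurableSet Y) (hX0 : μ X ≠ 0)
    {G : Set (T × α)} {H : Set (T × β)} (hG : MeasurableSet G) (hH : MeasurableSet H)
    (hGH : ∀ᵐ t ∂σ, (fun x => κ x (Prod.mk t ⁻¹' H)) =ᵐ[μ] (Prod.mk t ⁻¹' G).indicator 1) :
    ∃ f : Set T, (∀ᵐ z ∂σ.prod μ, z.2 ∈ X → (z ∈ G ↔ z.1 ∈ f)) ∧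
      ∀ᵐ z ∂σ.prod ν, z.2 ∈ Y → (z ∈ H ↔ z.1 ∈ f) := by
  -- A measurable choice of the proposition which locking provides for each `t`.
  set f : Set T := {t | μ (Prod.mk t ⁻¹' (G ∩ Prod.snd ⁻¹' X)) ≠ 0}
  have hf : MeasurableSet f :=
    measurable_measure_prodMk_left (hG.inter (measurable_snd hX)) (measurableSet_singleton 0).compl
  have hlock : ∀ᵐ t ∂σ, (∀ᵐ x ∂μ, x ∈ X → ((t, x) ∈ G ↔ t ∈ f)) ∧
      ∀ᵐ y ∂ν, y ∈ Y → ((t, y) ∈ H ↔ t ∈ f) := by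
    filter_upwards [hGH] with t ht
    obtain ⟨P, hGP, hHP⟩ := hκ (measurable_prodMk_left hG) (measurable_prodMk_left hH) ht
    have hPf : P ↔ t ∈ f := by
      refine ⟨fun hP h0 => hX0 ?_, fun htf => by_contra fun hP => htf ?_⟩ <;>
        refine measure_eq_zero_iff_ae_notMem.2 ?_
      · filter_upwards [hGP, measure_eq_zero_iff_ae_notMem.1 h0] with x hx hx' hxX
        exact hx' ⟨(hx hxX).2 hP, hxX⟩
      · filter_upwards [hGP] with x hx hxG using hP ((hx hxG.2).1 hxG.1)
    simp only [← hPf]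
    exact ⟨hGP, hHP⟩
  refine ⟨f, (Measure.ae_prod_iff_ae_ae ?_).2 (hlock.mono fun t ht => ht.1),
    (Measure.ae_prod_iff_ae_ae ?_).2 (hlock.mono fun t ht => ht.2)⟩
  · exact ((measurable_snd hX).mem.imp (hG.mem.iff (measurable_fst hf).mem)).setOf
  · exact ((measurable_snd hY).mem.imp (hH.mem.iff (measurable_fst hf).mem)).setOf

end LockingKernel

section Chords

variable {γ u v x : ℝ}

theorem mem_Eset_iff :
    (u, v) ∈ Eset γ ↔ (v + u * Real.cos γ) ^ 2 < 1 - u ^ 2 * Real.sin γ ^ 2 := by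
  rw [Real.sin_sq, Eset, mem_ofPred_eq]
  constructor <;> intro h <;> linarith

theorem swap_preimage_Eset (γ : ℝ) : Prod.swap ⁻¹' Eset γ = Eset γ := by
  ext ⟨u, v⟩
  simp only [Eset, mem_preimage, Prod.swap_prod_mk, mem_ofPred_eq]
  constructor <;> intro h <;> linarith

theorem swap_mem_Eset {z : ℝ × ℝ} (hz : z ∈ Eset γ) : z.swap ∈ Eset γ :=
  (swap_preimage_Eset γ).ge hz

theorem isOpen_Eset (γ : ℝ) : IsOpen (Eset γ) :=
  isOpen_lt (by fun_prop) continuous_const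

theorem one_sub_sq_mul_sin_sq_pos (h : (u, v) ∈ Eset γ) : 0 < 1 - u ^ 2 * Real.sin γ ^ 2 :=
  (sq_nonneg _).trans_lt (mem_Eset_iff.1 h)

theorem one_sub_sq_mul_sin_sq_pos_iff (hγ : Real.sin γ ≠ 0) :
    0 < 1 - u ^ 2 * Real.sin γ ^ 2 ↔ u ∈ Ioo (-|Real.sin γ|⁻¹) |Real.sin γ|⁻¹ := by
  rw [mem_Ioo, ← abs_lt, ← one_div, lt_div_iff₀ (abs_pos.2 hγ), ← abs_mul, sub_pos, ← mul_pow,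
    sq_lt_one_iff_abs_lt_one]

theorem volume_Eset_ne_top (hγ : Real.sin γ ≠ 0) : volume (Eset γ) ≠ ∞ := by
  set I := Ioo (-|Real.sin γ|⁻¹) |Real.sin γ|⁻¹
  have hbound {u v : ℝ} (h : (u, v) ∈ Eset γ) : u ∈ I :=
    (one_sub_sq_mul_sin_sq_pos_iff hγ).1 (one_sub_sq_mul_sin_sq_pos h)
  have hsub : Eset γ ⊆ I ×ˢ I := fun z hz => ⟨hbound hz, hbound (swap_mem_Eset hz)⟩
  refine ne_top_of_le_ne_top ?_ (measure_mono hsub)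
  rw [Measure.volume_eq_prod, Measure.prod_prod]
  exact ENNReal.mul_ne_top measure_Ioo_lt_top.ne measure_Ioo_lt_top.ne

theorem ellMap_ellInv (h : 0 < 1 - u ^ 2 * Real.sin γ ^ 2) (v : ℝ) :
    ellMap γ u (ellInv γ u v) = v := by
  rw [ellMap, ellInv, div_mul_cancel₀ _ (Real.sqrt_pos.2 h).ne']
  ring

theorem ellInv_ellMap (h : 0 < 1 - u ^ 2 * Real.sin γ ^ 2) (x : ℝ) :
    ellInv γ u (ellMap γ u x) = x := by
  rw [ellInv, ellMap, neg_mul, neg_add_cancel_comm, mul_div_cancel_right₀ _ (Real.sqrt_pos.2 h).ne']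

theorem mk_ellMap_mem_Eset_iff (h : 0 < 1 - u ^ 2 * Real.sin γ ^ 2) :
    (u, ellMap γ u x) ∈ Eset γ ↔ x ∈ Ioo (-1 : ℝ) 1 := by
  rw [mem_Eset_iff, ellMap, neg_mul, neg_add_cancel_comm, mul_pow, Real.sq_sqrt h.le,
    mul_lt_iff_lt_one_left h, sq_lt_one_iff_abs_lt_one, abs_lt, mem_Ioo]

@[fun_prop]
theorem measurable_ellMap (γ : ℝ) : Measurable fun z : ℝ × ℝ => ellMap γ z.1 z.2 := by
  unfold ellMap
  fun_prop

@[fun_prop]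
theorem measurable_ellInv (γ : ℝ) : Measurable fun z : ℝ × ℝ => ellInv γ z.1 z.2 := by
  unfold ellInv
  fun_prop

instance : IsProbabilityMeasure m1 where
  measure_univ := by
    rw [m1, Measure.smul_apply, Measure.restrict_apply_univ, Real.volume_Ioo, sub_neg_eq_add,
      one_add_one_eq_two, ENNReal.ofReal_ofNat, smul_eq_mul,
      ENNReal.inv_mul_cancel two_ne_zero ENNReal.ofNat_ne_top]

theorem map_affine_volume (a b : ℝ) (ha : a ≠ 0) :
    Measure.map (fun x : ℝ => b + x * a) volume = ENNReal.ofReal |a⁻¹| • volume := by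
  change Measure.map ((b + ·) ∘ (· * a)) volume = _
  rw [← Measure.map_map (by fun_prop) (by fun_prop), Real.map_volume_mul_right ha,
    Measure.map_smul, map_add_left_eq_self]

theorem smul_map_ellMap_m1 (γ u : ℝ) :
    ENNReal.ofReal (2 * √(1 - u ^ 2 * Real.sin γ ^ 2)) • m1.map (ellMap γ u) =
      volume.restrict (Prod.mk u ⁻¹' Eset γ) := by
  by_cases h : 0 < 1 - u ^ 2 * Real.sin γ ^ 2
  · have hs := Real.sqrt_pos.2 h
    have hemb : MeasurableEmbedding (ellMap γ u) :=
      ((Homeomorph.mulRight₀ _ hs.ne').trans (Homeomorph.addLeft _)).measurableEmbedding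
    have hpre : ellMap γ u ⁻¹' (Prod.mk u ⁻¹' Eset γ) = Ioo (-1) 1 :=
      ext fun x => mk_ellMap_mem_Eset_iff h
    have hmap := hemb.restrict_map volume (Prod.mk u ⁻¹' Eset γ)
    have hvol : Measure.map (ellMap γ u) volume = _ := map_affine_volume _ _ hs.ne'
    rw [hpre, hvol, Measure.restrict_smul] at hmap
    have hone : ENNReal.ofReal (2 * √(1 - u ^ 2 * Real.sin γ ^ 2)) * 2⁻¹ *
        ENNReal.ofReal |(√(1 - u ^ 2 * Real.sin γ ^ 2))⁻¹| = 1 := by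
      rw [abs_of_pos (inv_pos.2 hs), ← ENNReal.ofReal_ofNat 2,
        ← ENNReal.ofReal_inv_of_pos two_pos, ← ENNReal.ofReal_mul (by positivity),
        ← ENNReal.ofReal_mul (by positivity), ENNReal.ofReal_eq_one]
      field_simp
    rw [m1, Measure.map_smul, ← hmap, smul_smul, smul_smul, hone, one_smul]
  · have hempty : Prod.mk u ⁻¹' Eset γ = ∅ :=
      eq_empty_of_forall_notMem fun v hv => h (one_sub_sq_mul_sin_sq_pos hv)
    simp [hempty, Real.sqrt_eq_zero_of_nonpos (not_lt.1 h)]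

/-- The law of the first coordinate under Lebesgue measure on `E`; its density at `u` is the length
of the chord `E_u`. -/
def chordMeasure (γ : ℝ) : Measure ℝ :=
  volume.withDensity fun u => ENNReal.ofReal (2 * √(1 - u ^ 2 * Real.sin γ ^ 2))

instance (γ : ℝ) : SFinite (chordMeasure γ) := by
  unfold chordMeasure
  infer_instance

theorem ae_chordMeasure_pos (γ : ℝ) :
    ∀ᵐ u ∂chordMeasure γ, 0 < 1 - u ^ 2 * Real.sin γ ^ 2 := by
  rw [chordMeasure, ae_withDensity_iff (by fun_prop)]
  refine ae_of_all _ fun u hu => Real.sqrt_pos.1 ?_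
  simpa using hu

/-- The parametrization `(u, x) ↦ (u, ℓ_u(x))` of `E` by its chords. -/
def chordMap (γ : ℝ) (z : ℝ × ℝ) : ℝ × ℝ := (z.1, ellMap γ z.1 z.2)

/-- The inverse `(u, v) ↦ (u, ℓ_u⁻¹(v))` of `chordMap`. -/
def chordInv (γ : ℝ) (z : ℝ × ℝ) : ℝ × ℝ := (z.1, ellInv γ z.1 z.2)

@[fun_prop]
theorem measurable_chordMap (γ : ℝ) : Measurable (chordMap γ) := by
  unfold chordMap
  fun_prop

@[fun_prop]
theorem measurable_chordInv (γ : ℝ) : Measurable (chordInv γ) := by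
  unfold chordInv
  fun_prop

theorem chordMap_chordInv {z : ℝ × ℝ} (hz : z ∈ Eset γ) : chordMap γ (chordInv γ z) = z :=
  Prod.ext rfl (ellMap_ellInv (one_sub_sq_mul_sin_sq_pos hz) z.2)

theorem ae_chordInv_chordMap (γ : ℝ) :
    ∀ᵐ z ∂(chordMeasure γ).prod m1, chordInv γ (chordMap γ z) = z := by
  filter_upwards [Measure.quasiMeasurePreserving_fst.ae (ae_chordMeasure_pos γ)] with z hz
  exact Prod.ext rfl (ellInv_ellMap hz z.2)

theorem measurePreserving_chordMap (γ : ℝ) :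
    MeasurePreserving (chordMap γ) ((chordMeasure γ).prod m1) (volume.restrict (Eset γ)) := by
  refine ⟨measurable_chordMap γ, Measure.ext fun s hs => ?_⟩
  have hslice (u : ℝ) : ENNReal.ofReal (2 * √(1 - u ^ 2 * Real.sin γ ^ 2)) *
      m1 (Prod.mk u ⁻¹' (chordMap γ ⁻¹' s)) = volume (Prod.mk u ⁻¹' (s ∩ Eset γ)) := by
    have hsu : MeasurableSet (Prod.mk u ⁻¹' s) := measurable_prodMk_left hs
    have h := congrArg (· (Prod.mk u ⁻¹' s)) (smul_map_ellMap_m1 γ u)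
    simp only [Measure.smul_apply, Measure.restrict_apply hsu] at h
    have hell : Measurable (ellMap γ u) := (measurable_ellMap γ).comp measurable_prodMk_left
    rwa [Measure.map_apply hell hsu] at h
  rw [Measure.map_apply (measurable_chordMap γ) hs,
    Measure.prod_apply (measurable_chordMap γ hs), chordMeasure,
    lintegral_withDensity_eq_lintegral_mul _ (by fun_prop)
      (measurable_measure_prodMk_left (measurable_chordMap γ hs)),
    Measure.restrict_apply hs, Measure.volume_eq_prod,
    Measure.prod_apply (hs.inter (isOpen_Eset γ).measurableSet)]
  exact lintegral_congr hslice

theorem measurePreserving_chordInv (γ : ℝ) :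
    MeasurePreserving (chordInv γ) (volume.restrict (Eset γ)) ((chordMeasure γ).prod m1) := by
  have hid : chordInv γ ∘ chordMap γ =ᵐ[(chordMeasure γ).prod m1] id := ae_chordInv_chordMap γ
  refine ⟨measurable_chordInv γ, ?_⟩
  rw [← (measurePreserving_chordMap γ).map_eq,
    Measure.map_map (measurable_chordInv γ) (measurable_chordMap γ), Measure.map_congr hid,
    Measure.map_id]

theorem measurePreserving_swap_Eset (γ : ℝ) :
    MeasurePreserving Prod.swap (volume.restrict (Eset γ)) (volume.restrict (Eset γ)) := by
  have hswap : MeasurePreserving (Prod.swap : ℝ × ℝ → ℝ × ℝ) := Measure.measurePreserving_swap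
  have h := hswap.restrict_preimage (isOpen_Eset γ).measurableSet
  rwa [swap_preimage_Eset] at h

end Chords

section Crossing

variable {γ a x y : ℝ} {X Y : Set ℝ}

theorem ellMap_ellMap_of_sq_mul_sin_sq_eq_one (ha : a ^ 2 * Real.sin γ ^ 2 = 1) (x y : ℝ) :
    ellMap γ (ellMap γ a x) y = a * Real.cos γ ^ 2 + y * |Real.sin γ| := by
  have hend : ellMap γ a x = -a * Real.cos γ := by simp [ellMap, ha]
  have hlen : 1 - (-a * Real.cos γ) ^ 2 * Real.sin γ ^ 2 = Real.sin γ ^ 2 := by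
    linear_combination (-Real.cos γ ^ 2) * ha - Real.sin_sq_add_cos_sq γ
  rw [hend, ellMap, hlen, Real.sqrt_sq_eq_abs]
  ring

theorem exists_ellMap_ellMap_eq (hγ : Real.sin γ ≠ 0) (x : ℝ) (hy : y ∈ Ioo (-1 : ℝ) 1) :
    ∃ u ∈ Ioo (-|Real.sin γ|⁻¹) |Real.sin γ|⁻¹, ellMap γ (ellMap γ u x) y = u := by
  have hs := abs_pos.2 hγ
  have hcos : |Real.sin γ|⁻¹ * Real.cos γ ^ 2 = |Real.sin γ|⁻¹ - |Real.sin γ| := by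
    rw [Real.cos_sq', ← sq_abs (Real.sin γ)]
    field_simp
  have hcont : ContinuousOn (fun u => ellMap γ (ellMap γ u x) y - u)
      (Icc (-|Real.sin γ|⁻¹) |Real.sin γ|⁻¹) := by
    unfold ellMap
    fun_prop
  suffices h : (0 : ℝ) ∈ Ioo _ _ by
    obtain ⟨u, hu, h0⟩ := intermediate_value_Ioo' (by linarith [inv_pos.2 hs]) hcont h
    exact ⟨u, hu, sub_eq_zero.1 h0⟩
  have hsq : |Real.sin γ|⁻¹ ^ 2 * Real.sin γ ^ 2 = 1 := by
    rw [← sq_abs (Real.sin γ), ← mul_pow, inv_mul_cancel₀ hs.ne', one_pow]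
  rw [mem_Ioo, ellMap_ellMap_of_sq_mul_sin_sq_eq_one hsq,
    ellMap_ellMap_of_sq_mul_sin_sq_eq_one (by rwa [neg_sq]), neg_mul, hcos]
  constructor <;> nlinarith [hy.1, hy.2]

theorem exists_mem_Eset_ellInv_eq (hγ : Real.sin γ ≠ 0) (hx : x ∈ Ioo (-1 : ℝ) 1)
    (hy : y ∈ Ioo (-1 : ℝ) 1) :
    ∃ z ∈ Eset γ, ellInv γ z.1 z.2 = x ∧ ellInv γ z.2 z.1 = y := by
  obtain ⟨u, hu, hfix⟩ := exists_ellMap_ellMap_eq hγ x hy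
  have hpos := (one_sub_sq_mul_sin_sq_pos_iff hγ).2 hu
  have hmem : (u, ellMap γ u x) ∈ Eset γ := (mk_ellMap_mem_Eset_iff hpos).2 hx
  have hback := ellInv_ellMap (one_sub_sq_mul_sin_sq_pos (swap_mem_Eset hmem)) y
  exact ⟨_, hmem, ellInv_ellMap hpos x, by rwa [hfix] at hback⟩

theorem differentiableAt_ellInv {z : ℝ × ℝ} (hz : z ∈ Eset γ) :
    DifferentiableAt ℝ (fun z : ℝ × ℝ => ellInv γ z.1 z.2) z := by
  have hpos := one_sub_sq_mul_sin_sq_pos hz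
  have hsqrt : DifferentiableAt ℝ (fun z : ℝ × ℝ => √(1 - z.1 ^ 2 * Real.sin γ ^ 2)) z :=
    DifferentiableAt.sqrt (by fun_prop) hpos.ne'
  simp only [ellInv, div_eq_mul_inv]
  exact DifferentiableAt.fun_mul (by fun_prop) (hsqrt.fun_inv (Real.sqrt_pos.2 hpos).ne')

/-- The set of points of `E` whose position on the vertical chord lies in `X` and whose position on
the horizontal chord lies in `Y`. -/
def crossingSet (γ : ℝ) (X Y : Set ℝ) : Set (ℝ × ℝ) :=
  {z | z ∈ Eset γ ∧ ellInv γ z.1 z.2 ∈ X ∧ ellInv γ z.2 z.1 ∈ Y}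

theorem measurableSet_crossingSet (hX : MeasurableSet X) (hY : MeasurableSet Y) :
    MeasurableSet (crossingSet γ X Y) :=
  (isOpen_Eset γ).measurableSet.inter
    ((measurable_ellInv γ hX).inter (measurable_swap (measurable_ellInv γ hY)))

theorem volume_crossingSet_ne_zero (hγ : Real.sin γ ≠ 0) (hX : m1 X ≠ 0) (hY : m1 Y ≠ 0) :
    volume (crossingSet γ X Y) ≠ 0 := by
  set Ψ : ℝ × ℝ → ℝ × ℝ := fun z => (ellInv γ z.1 z.2, ellInv γ z.2 z.1)
  have hΨ : DifferentiableOn ℝ Ψ (crossingSet γ X Y) := fun z hz =>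
    ((differentiableAt_ellInv hz.1).prodMk
      ((differentiableAt_ellInv (swap_mem_Eset hz.1)).comp z
        (differentiableAt_snd.prodMk differentiableAt_fst))).differentiableWithinAt
  have himage : (X ∩ Ioo (-1) 1) ×ˢ (Y ∩ Ioo (-1) 1) ⊆ Ψ '' crossingSet γ X Y := by
    rintro ⟨x, y⟩ ⟨⟨hxX, hx⟩, hyY, hy⟩
    obtain ⟨z, hz, rfl, rfl⟩ := exists_mem_Eset_ellInv_eq hγ hx hy
    exact ⟨z, ⟨hz, hxX, hyY⟩, rfl⟩
  have hvol {A : Set ℝ} (hA : m1 A ≠ 0) : volume (A ∩ Ioo (-1) 1) ≠ 0 := by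
    rw [m1, Measure.smul_apply, Measure.restrict_apply' measurableSet_Ioo, smul_eq_mul] at hA
    exact right_ne_zero_of_mul hA
  intro hC
  have hprod := measure_mono_null himage
    (addHaar_image_eq_zero_of_differentiableOn_of_addHaar_eq_zero volume hΨ hC)
  rw [Measure.volume_eq_prod, Measure.prod_prod] at hprod
  exact mul_ne_zero (hvol hX) (hvol hY) hprod

end Crossing

section Kernels

theorem comp_map_eq_comap_comp {α β δ : Type*} [MeasurableSpace α] [MeasurableSpace β]
    [MeasurableSpace δ] (κ : Kernel β δ) (μ : Measure α) {f : α → β} (hf : Measurable f) :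
    κ ∘ₘ μ.map f = κ.comap f hf ∘ₘ μ := by
  rw [← Measure.deterministic_comp_eq_map hf, Measure.comp_assoc,
    Kernel.comp_deterministic_eq_comap]

theorem Reversible1.kInvariantMeasure {q : Kernel ℝ ℝ} [IsMarkovKernel q] (hq : Reversible1 q) :
    KInvariantMeasure m1 q := by
  rw [kInvariantMeasure_iff_invariant]
  refine ext_of_forall_integral_eq_of_IsFiniteMeasure fun f => ?_
  have hrev := hq f (fun _ => 1)
    ⟨f.continuous.continuousOn, ‖f‖, fun x _ => f.norm_coe_le_norm x⟩
    ⟨continuousOn_const, 1, by simp⟩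
  have hf : Integrable (fun z : ℝ × ℝ => f z.2) (m1 ⊗ₘ q) :=
    (f.integrable (m1 ⊗ₘ q).snd).comp_measurable measurable_snd
  rw [← Measure.snd_compProd, Measure.snd, integral_map (by fun_prop) (by fun_prop),
    Measure.integral_compProd hf]
  simpa using hrev

/-- The kernel `q̂(x, ·) = q(-x, ·)`. -/
def reflectKernel (q : Kernel ℝ ℝ) : Kernel ℝ ℝ := q.comap Neg.neg measurable_neg

instance (q : Kernel ℝ ℝ) [IsMarkovKernel q] : IsMarkovKernel (reflectKernel q) := by
  unfold reflectKernel
  infer_instance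

theorem measurePreserving_neg_m1 : MeasurePreserving Neg.neg m1 m1 := by
  have h := ((Measure.measurePreserving_neg (volume : Measure ℝ)).restrict_preimage
    (measurableSet_Ioo (a := -1) (b := 1))).smul_measure (2 : ℝ≥0∞)⁻¹
  rwa [neg_preimage, neg_Ioo, neg_neg] at h

theorem invariant_reflectKernel {q : Kernel ℝ ℝ} (hq : q.Invariant m1) :
    (reflectKernel q).Invariant m1 := by
  rw [Kernel.Invariant, reflectKernel, ← comp_map_eq_comap_comp, measurePreserving_neg_m1.map_eq,
    hq.def]

theorem frequently_reflectKernel {q : Kernel ℝ ℝ} {P : Measure ℝ → Prop}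
    (hq : ∃ᵐ x ∂m1, P (q x)) : ∃ᵐ x ∂m1, P (reflectKernel q x) := fun h => hq <| by
  filter_upwards [measurePreserving_neg_m1.quasiMeasurePreserving.ae h] with x hx
  rwa [reflectKernel, Kernel.comap_apply, neg_neg] at hx

variable {γ : ℝ} {p q : Kernel ℝ ℝ}

/-- The kernel on `E` which keeps the first coordinate `u` and moves the position on the chord `E_u`
according to `p`. -/
def chordKernel (γ : ℝ) (p : Kernel ℝ ℝ) : Kernel (ℝ × ℝ) (ℝ × ℝ) :=
  ((Kernel.id ∥ₖ p).comap (chordInv γ) (measurable_chordInv γ)).map (chordMap γ)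

instance [IsMarkovKernel p] : IsMarkovKernel (chordKernel γ p) := by
  unfold chordKernel
  exact Kernel.IsMarkovKernel.map _ (measurable_chordMap γ)

theorem chordKernel_apply [IsMarkovKernel p] (z : ℝ × ℝ) :
    chordKernel γ p z = (p (ellInv γ z.1 z.2)).map fun x => (z.1, ellMap γ z.1 x) := by
  rw [chordKernel, Kernel.map_apply _ (measurable_chordMap γ), Kernel.comap_apply,
    Kernel.parallelComp_apply, Kernel.id_apply, Measure.dirac_prod,
    Measure.map_map (measurable_chordMap γ) measurable_prodMk_left]
  rfl

theorem invariant_chordKernel [IsMarkovKernel p] (hp : p.Invariant m1) :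
    (chordKernel γ p).Invariant (volume.restrict (Eset γ)) := by
  rw [Kernel.Invariant, chordKernel, ← Measure.map_comp _ _ (measurable_chordMap γ),
    ← comp_map_eq_comap_comp, (measurePreserving_chordInv γ).map_eq, ← Measure.prod_comp_right,
    hp.def, (measurePreserving_chordMap γ).map_eq]

theorem LockedByKernel.exists_ae_Eset_iff [IsMarkovKernel p] {X Y : Set ℝ}
    (hp : LockedByKernel p m1 m1 X Y) (hX : MeasurableSet X) (hY : MeasurableSet Y)
    (hX0 : m1 X ≠ 0) {G H : Set (ℝ × ℝ)}
    (hG : MeasurableSet G) (hH : MeasurableSet H)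
    (hGH : (fun z => chordKernel γ p z H) =ᵐ[volume.restrict (Eset γ)] G.indicator 1) :
    ∃ f : Set ℝ, ∀ᵐ z ∂volume.restrict (Eset γ), (ellInv γ z.1 z.2 ∈ X → (z ∈ G ↔ z.1 ∈ f)) ∧
      (ellInv γ z.1 z.2 ∈ Y → (z ∈ H ↔ z.1 ∈ f)) := by
  have hpull : ∀ᵐ w ∂(chordMeasure γ).prod m1,
      p w.2 (Prod.mk w.1 ⁻¹' (chordMap γ ⁻¹' H)) =
        (Prod.mk w.1 ⁻¹' (chordMap γ ⁻¹' G)).indicator 1 w.2 := by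
    filter_upwards [(measurePreserving_chordMap γ).quasiMeasurePreserving.ae hGH,
      ae_chordInv_chordMap γ] with w hw hinv
    have hx : ellInv γ (chordMap γ w).1 (chordMap γ w).2 = w.2 := congrArg Prod.snd hinv
    rwa [chordKernel_apply, Measure.map_apply (by fun_prop) hH, hx] at hw
  obtain ⟨f, hfG, hfH⟩ := hp.exists_ae_prod_iff hX hY hX0 (measurable_chordMap γ hG)
    (measurable_chordMap γ hH) (Measure.ae_ae_of_ae_prod hpull)
  have hinv := (measurePreserving_chordInv γ).quasiMeasurePreserving
  refine ⟨f, ?_⟩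
  filter_upwards [hinv.ae hfG, hinv.ae hfH, ae_restrict_mem (isOpen_Eset γ).measurableSet]
    with z hzG hzH hz
  rw [mem_preimage, chordMap_chordInv hz] at hzG hzH
  exact ⟨hzG, hzH⟩

/-- The inclusion of the plane into `ℝ × ℝ × ℝ` as the level `s`. -/
def level (s : ℝ) (z : ℝ × ℝ) : ℝ × ℝ × ℝ := (z.1, z.2, s)

@[fun_prop]
theorem measurable_level (s : ℝ) : Measurable (level s) := by
  unfold level
  fun_prop

/-- The kernel `Q` of the alternating walk, bundling `Qfun`. -/
def walkKernel (γ : ℝ) (q : Kernel ℝ ℝ) : Kernel (ℝ × ℝ × ℝ) (ℝ × ℝ × ℝ) :=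
  Kernel.piecewise (measurableSet_eq_fun measurable_snd.snd (measurable_const (a := (-1 : ℝ))))
    (((chordKernel γ (reflectKernel q)).comap (fun w => (w.2.1, w.1)) (by fun_prop)).map
      (level 1 ∘ Prod.swap))
    (((chordKernel γ (reflectKernel q)).comap (fun w => (w.1, w.2.1)) (by fun_prop)).map
      (level (-1)))

instance [IsMarkovKernel q] : IsMarkovKernel (walkKernel γ q) :=
  have := Kernel.IsMarkovKernel.map ((chordKernel γ (reflectKernel q)).comap
    (fun w : ℝ × ℝ × ℝ => (w.2.1, w.1)) (by fun_prop))
    ((measurable_level 1).comp measurable_swap)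
  have := Kernel.IsMarkovKernel.map ((chordKernel γ (reflectKernel q)).comap
    (fun w : ℝ × ℝ × ℝ => (w.1, w.2.1)) (by fun_prop)) (measurable_level (-1))
  inferInstanceAs (IsMarkovKernel (Kernel.piecewise _ _ _))

theorem coe_walkKernel (γ : ℝ) (q : Kernel ℝ ℝ) [IsMarkovKernel q] :
    ⇑(walkKernel γ q) = Qfun γ q := by
  have hell (u : ℝ) : Measurable (ellMap γ u) := (measurable_ellMap γ).comp measurable_prodMk_left
  funext w
  rw [walkKernel, Kernel.piecewise_apply, Qfun]
  refine if_congr Iff.rfl ?_ ?_ <;>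
  · rw [Kernel.map_apply _ (by fun_prop), Kernel.comap_apply, chordKernel_apply,
      Measure.map_map (by fun_prop) (measurable_const.prodMk (hell _))]
    rfl

theorem walkKernel_comap_level_one :
    (walkKernel γ q).comap (level 1) (measurable_level 1) =
      (chordKernel γ (reflectKernel q)).map (level (-1)) := by
  ext1 z
  rw [Kernel.comap_apply, walkKernel, Kernel.piecewise_apply, if_neg (by norm_num [level]),
    Kernel.map_apply _ (by fun_prop), Kernel.map_apply _ (by fun_prop), Kernel.comap_apply]
  rfl

theorem walkKernel_comap_level_neg_one :
    (walkKernel γ q).comap (level (-1)) (measurable_level (-1)) =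
      ((chordKernel γ (reflectKernel q)).comap Prod.swap measurable_swap).map
        (level 1 ∘ Prod.swap) := by
  ext1 z
  rw [Kernel.comap_apply, walkKernel, Kernel.piecewise_apply, if_pos (by simp [level]),
    Kernel.map_apply _ (by fun_prop), Kernel.map_apply _ (by fun_prop), Kernel.comap_apply]
  rfl

end Kernels

section Walk

variable {γ : ℝ} {q : Kernel ℝ ℝ}

theorem m2_eq_smul_add (γ : ℝ) :
    m2 γ = ((volume (Eset γ))⁻¹ * 2⁻¹) • ((volume.restrict (Eset γ)).map (level 1) +
      (volume.restrict (Eset γ)).map (level (-1))) := by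
  unfold m2
  rw [Measure.prod_smul_left, Measure.prod_smul_right, smul_smul, Measure.map_smul,
    Measure.prod_add, Measure.prod_dirac, Measure.prod_dirac, Measure.map_add _ _ (by fun_prop),
    Measure.map_map (by fun_prop) (by fun_prop), Measure.map_map (by fun_prop) (by fun_prop)]
  rfl

instance (γ : ℝ) : IsFiniteMeasure (m2 γ) := by
  have : IsFiniteMeasure ((volume (Eset γ))⁻¹ • volume.restrict (Eset γ)) :=
    inferInstanceAs (IsFiniteMeasure (volume[|Eset γ]))
  have : IsFiniteMeasure ((2 : ℝ≥0∞)⁻¹ • (Measure.dirac (1 : ℝ) + Measure.dirac (-1))) :=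
    Measure.smul_finite _ (by simp)
  unfold m2
  infer_instance

theorem ae_m2_iff (hγ : Real.sin γ ≠ 0) {P : ℝ × ℝ × ℝ → Prop} (hP : MeasurableSet {w | P w}) :
    (∀ᵐ w ∂m2 γ, P w) ↔
      ∀ᵐ z ∂volume.restrict (Eset γ), P (level 1 z) ∧ P (level (-1) z) := by
  rw [m2_eq_smul_add, Measure.ae_ennreal_smul_measure_iff
      (mul_ne_zero (ENNReal.inv_ne_zero.2 (volume_Eset_ne_top hγ)) (by simp)),
    ae_add_measure_iff, ae_map_iff (by fun_prop) hP, ae_map_iff (by fun_prop) hP,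
    Filter.eventually_and]

theorem invariant_walkKernel [IsMarkovKernel q] (hq : q.Invariant m1) :
    (walkKernel γ q).Invariant (m2 γ) := by
  have hchord := (invariant_chordKernel (γ := γ) (invariant_reflectKernel hq)).def
  have hup : walkKernel γ q ∘ₘ (volume.restrict (Eset γ)).map (level 1) =
      (volume.restrict (Eset γ)).map (level (-1)) := by
    rw [comp_map_eq_comap_comp _ _ (measurable_level 1), walkKernel_comap_level_one,
      ← Measure.map_comp _ _ (measurable_level (-1)), hchord]
  have hdown : walkKernel γ q ∘ₘ (volume.restrict (Eset γ)).map (level (-1)) =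
      (volume.restrict (Eset γ)).map (level 1) := by
    rw [comp_map_eq_comap_comp _ _ (measurable_level (-1)), walkKernel_comap_level_neg_one,
      ← Measure.map_comp _ _ (by fun_prop), ← comp_map_eq_comap_comp,
      (measurePreserving_swap_Eset γ).map_eq, hchord,
      ← Measure.map_map (measurable_level 1) measurable_swap,
      (measurePreserving_swap_Eset γ).map_eq]
  rw [Kernel.Invariant, m2_eq_smul_add, Measure.comp_smul, Measure.comp_add, hup, hdown, add_comm]

theorem measurableSet_Fplus {F : Set (ℝ × ℝ × ℝ)} (hF : MeasurableSet F) :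
    MeasurableSet (Fplus F) :=
  measurable_level 1 hF

theorem measurableSet_Fminus {F : Set (ℝ × ℝ × ℝ)} (hF : MeasurableSet F) :
    MeasurableSet (Fminus F) :=
  measurable_level (-1) hF

theorem KInvariantSet.chordKernel_ae_eq_indicator [IsMarkovKernel q] (hγ : Real.sin γ ≠ 0)
    (hq : q.Invariant m1) {F : Set (ℝ × ℝ × ℝ)} (hF : MeasurableSet F)
    (hFinv : KInvariantSet (m2 γ) (walkKernel γ q) F) :
    ((fun z => chordKernel γ (reflectKernel q) z (Fminus F)) =ᵐ[volume.restrict (Eset γ)]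
        (Fplus F).indicator 1) ∧
      (fun z => chordKernel γ (reflectKernel q) z (Prod.swap ⁻¹' Fplus F))
        =ᵐ[volume.restrict (Eset γ)] (Prod.swap ⁻¹' Fminus F).indicator 1 := by
  have hup (z : ℝ × ℝ) : walkKernel γ q (level 1 z) F =
      chordKernel γ (reflectKernel q) z (Fminus F) := by
    rw [← Kernel.comap_apply _ (measurable_level 1), walkKernel_comap_level_one,
      Kernel.map_apply' _ (measurable_level (-1)) _ hF]
    rfl
  have hdown (z : ℝ × ℝ) : walkKernel γ q (level (-1) z) F =
      chordKernel γ (reflectKernel q) z.swap (Prod.swap ⁻¹' Fplus F) := by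
    rw [← Kernel.comap_apply _ (measurable_level (-1)), walkKernel_comap_level_neg_one,
      Kernel.map_apply' _ (by fun_prop) _ hF]
    rfl
  have hind := hFinv.ae_eq_indicator
    (kInvariantMeasure_iff_invariant.2 (invariant_walkKernel hq)) hF
  rw [Filter.EventuallyEq, ae_m2_iff hγ (measurableSet_eq_fun (Kernel.measurable_coe _ hF)
    (measurable_one.indicator hF))] at hind
  constructor
  · filter_upwards [hind] with z hz
    exact (hup z).symm.trans hz.1
  · filter_upwards [(measurePreserving_swap_Eset γ).quasiMeasurePreserving.ae hind] with z hz
    exact (hdown z.swap).symm.trans hz.2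

theorem LockedByKernel.exists_ae_crossingSet_iff [IsMarkovKernel q] (hγ : Real.sin γ ≠ 0)
    (hq : q.Invariant m1) {X Y : Set ℝ} (hXY : LockedByKernel (reflectKernel q) m1 m1 X Y)
    (hX : MeasurableSet X) (hY : MeasurableSet Y) (hX0 : m1 X ≠ 0) {F : Set (ℝ × ℝ × ℝ)}
    (hF : MeasurableSet F) (hFinv : KInvariantSet (m2 γ) (walkKernel γ q) F) :
    ∃ f g : Set ℝ, ∀ᵐ z ∂volume, z ∈ crossingSet γ X Y →
      (z ∈ Fplus F ↔ z.1 ∈ f) ∧ (z ∈ Fplus F ↔ z.2 ∈ g) := by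
  obtain ⟨hup, hdown⟩ := hFinv.chordKernel_ae_eq_indicator hγ hq hF
  have hF1 := measurableSet_Fplus hF
  have hF2 := measurableSet_Fminus hF
  obtain ⟨f, hf⟩ := hXY.exists_ae_Eset_iff hX hY hX0 hF1 hF2 hup
  obtain ⟨g, hg⟩ := hXY.exists_ae_Eset_iff hX hY hX0 (measurable_swap hF2) (measurable_swap hF1)
    hdown
  have hg' := (measurePreserving_swap_Eset γ).quasiMeasurePreserving.ae hg
  refine ⟨f, g, ?_⟩
  filter_upwards [ae_imp_of_ae_restrict hf, ae_imp_of_ae_restrict hg'] with z hzf hzg hz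
  exact ⟨(hzf hz.1).1 hz.2.1, (hzg hz.1).2 hz.2.2⟩

theorem level_injective (s : ℝ) : Function.Injective (level s) := fun z z' h => by
  rw [level, level, Prod.mk.injEq, Prod.mk.injEq] at h
  exact Prod.ext h.1 h.2.1

theorem level_one_image_ae_subset_iff (hγ : Real.sin γ ≠ 0) {C : Set (ℝ × ℝ)}
    (hC : MeasurableSet C) (hCE : C ⊆ Eset γ) {S : Set (ℝ × ℝ × ℝ)} (hS : MeasurableSet S) :
    level 1 '' C ≤ᵐ[m2 γ] S ↔ C ≤ᵐ[volume] Fplus S := by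
  have hmeas : MeasurableSet (level 1 '' C) :=
    ((measurable_level 1).measurableEmbedding (level_injective 1)).measurableSet_image.2 hC
  have hdown (z : ℝ × ℝ) : level (-1) z ∉ level 1 '' C := by
    rintro ⟨z', -, h⟩
    have h1 : (1 : ℝ) = -1 := congrArg (fun w => w.2.2) h
    norm_num at h1
  have hae : (∀ᵐ w ∂m2 γ, w ∈ level 1 '' C → w ∈ S) ↔
      ∀ᵐ z ∂volume.restrict (Eset γ), z ∈ C → z ∈ Fplus S := by
    rw [ae_m2_iff hγ (P := fun w => w ∈ level 1 '' C → w ∈ S) (hmeas.imp hS)]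
    simp only [(level_injective 1).mem_set_image, hdown, false_imp_iff, and_true]
    rfl
  refine hae.trans ?_
  rw [ae_restrict_iff' (isOpen_Eset γ).measurableSet]
  exact Filter.eventually_congr (.of_forall fun z => ⟨fun h hz => h (hCE hz) hz, fun h _ => h⟩)

theorem exists_forall_kInvariantSet_ae_subset_or_compl [IsMarkovKernel q] (hγ : Real.sin γ ≠ 0)
    (hq : q.Invariant m1) (hns : ∃ᵐ x ∂m1, ¬ q x ⟂ₘ m1) :
    ∃ D, m2 γ D ≠ 0 ∧ ∀ F, MeasurableSet F → KInvariantSet (m2 γ) (walkKernel γ q) F →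
      D ≤ᵐ[m2 γ] F ∨ D ≤ᵐ[m2 γ] Fᶜ := by
  obtain ⟨X, Y, hX, hY, hX0, hY0, hXY⟩ := exists_lockedByKernel
    (frequently_reflectKernel (P := fun μ => ¬ μ ⟂ₘ m1) hns)
  have hC : MeasurableSet (crossingSet γ X Y) := measurableSet_crossingSet hX hY
  obtain ⟨U, V, hU, hV, hUV0, hUV⟩ :=
    exists_forall_aeLocked_of_prod_ne_zero hC (volume_crossingSet_ne_zero hγ hX0 hY0)
  have hsub {S : Set (ℝ × ℝ × ℝ)} (hS : MeasurableSet S) :=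
    level_one_image_ae_subset_iff hγ (hC.inter (hU.prod hV)) (fun _ hz => hz.1.1) hS
  refine ⟨level 1 '' (crossingSet γ X Y ∩ U ×ˢ V), fun h0 => hUV0 ?_, fun F hF hFinv => ?_⟩
  · exact measure_eq_zero_iff_ae_notMem.2 ((hsub .empty).1 (measure_eq_zero_iff_ae_notMem.1 h0))
  obtain ⟨f, g, hfg⟩ := hXY.exists_ae_crossingSet_iff hγ hq hX hY hX0 hF hFinv
  obtain ⟨P, hfP, -⟩ := hUV f g <| by
    filter_upwards [hfg] with z hz hzC
    exact (hz hzC).1.symm.trans (hz hzC).2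
  have hFP : ∀ᵐ z ∂volume, z ∈ crossingSet γ X Y ∩ U ×ˢ V → (z ∈ Fplus F ↔ P) := by
    filter_upwards [hfg, Measure.quasiMeasurePreserving_fst.ae hfP] with z hz hzP hzD
    exact (hz hzD.1).1.trans (hzP hzD.2.1)
  by_cases hP : P
  · exact .inl ((hsub hF).2 (hFP.mono fun z hz hzD => (hz hzD).2 hP))
  · exact .inr ((hsub hF.compl).2 (hFP.mono fun z hz hzD hzF => hP ((hz hzD).1 hzF)))

end Walk

theorem exists_ac_ergodic_measure_general {γ : ℝ} (hγ : Real.sin γ ≠ 0) (q : Kernel ℝ ℝ)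
    [IsMarkovKernel q] (hinv : KInvariantMeasure m1 q) (hns : ∃ᵐ x ∂m1, ¬ q x ⟂ₘ m1) :
    ∃ μ : Measure (ℝ × ℝ × ℝ), IsProbabilityMeasure μ ∧
      KErgodicMeasure μ (Qfun γ q) ∧ μ ≪ m2 γ := by
  have hq := kInvariantMeasure_iff_invariant.1 hinv
  have hm2 : KInvariantMeasure (m2 γ) (walkKernel γ q) :=
    kInvariantMeasure_iff_invariant.2 (invariant_walkKernel hq)
  obtain ⟨D, hD0, hD⟩ := exists_forall_kInvariantSet_ae_subset_or_compl hγ hq hns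
  obtain ⟨G, hG, hDG⟩ := exists_kErgodicSet_of_forall_ae_subset_or_compl hm2 hD
  have hG0 : m2 γ G ≠ 0 := fun h0 => hD0 (measure_mono_null_ae hDG h0)
  rw [← coe_walkKernel]
  exact ⟨(m2 γ)[|G], cond_isProbabilityMeasure hG0, hG.kErgodicMeasure_cond hm2 hG0,
    cond_absolutelyContinuous⟩

/-- if `m¹` is reversible for `q` and `q(x,·)` is not mutually singular
with `m¹` for `m¹`-a.e. `x`, then there is a probability measure on `E*` which is ergodic
for `Q` and absolutely continuous with respect to `m²`. -/
theorem exists_ac_ergodic_measure (γ : ℝ) (hγ : γ ∈ Ioo 0 Real.pi)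
    (q : Kernel ℝ ℝ) (hq : IsMarkovOnInterval q)
    (hrev : Reversible1 q)
    (hns : ∀ᵐ x ∂m1, ¬ (q x).MutuallySingular m1) :
    ∃ μ : Measure (ℝ × ℝ × ℝ), IsProbabilityMeasure μ ∧
      KErgodicMeasure μ (Qfun γ q) ∧ μ ≪ m2 γ :=
  have := hq.1
  exists_ac_ergodic_measure_general (Real.sin_pos_of_mem_Ioo hγ).ne' q hrev.kInvariantMeasure
    hns.frequently
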